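/- Let Δ ≥ 1, let 𝒢 = (V,(E_t)_{t=1}^τ) be a temporal graph with τ = LΔ for an integer L ≥ 1, and for each i ∈ [L] let ℳ_i be a family of Δ-temporal matchings of 𝒢[Δ(i−1)+1, Δi] that is i-complete for 𝒢. Define T_1[M] := |M| for M ∈ ℳ_1 and, for i > 1 and M ∈ ℳ_i, T_i[M] := max({ |M| + T_{i−1}[M'] : M' ∈ ℳ_{i−1} and M ∪ M' is a Δ-temporal matching of 𝒢 } ∪ {0}). Then for every i ∈ [L], max_{M ∈ ℳ_i} T_i[M] equals the maximum size of a Δ-temporal matching of 𝒢[1, Δi]. -/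

import Mathlib

/-- A temporal graph on vertex set `V`: a lifetime `tau` and edge sets `E t`
(undirected edges, modeled as `Sym2 V`) for each time step. Only times
`1 ≤ t ≤ tau` give rise to time edges. -/
structure TemporalGraph (V : Type*) where
  tau : ℕ
  E : ℕ → Finset (Sym2 V)

variable {V : Type*}

/-- `(e, t)` is a time edge of `G`. -/
def IsTimeEdge (G : TemporalGraph V) (et : Sym2 V × ℕ) : Prop :=
  et.1 ∈ G.E et.2 ∧ 1 ≤ et.2 ∧ et.2 ≤ G.tau

/-- Two (undirected) edges share an endpoint. -/
def ShareEndpoint (e f : Sym2 V) : Prop := ∃ v, v ∈ e ∧ v ∈ f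

/-- Two time edges are `Δ`-independent: the edges share no endpoint,
or the time labels are at least `Δ` apart. -/
def DeltaIndep (Δ : ℕ) (x y : Sym2 V × ℕ) : Prop :=
  ¬ ShareEndpoint x.1 y.1 ∨ (Δ : ℤ) ≤ |(x.2 : ℤ) - (y.2 : ℤ)|

/-- A `Δ`-temporal matching of `G`: a set of time edges of `G` that are
pairwise `Δ`-independent. -/
def IsTemporalMatching (G : TemporalGraph V) (Δ : ℕ) (M : Finset (Sym2 V × ℕ)) : Prop :=
  (∀ et ∈ M, IsTimeEdge G et) ∧ ∀ x ∈ M, ∀ y ∈ M, x ≠ y → DeltaIndep Δ x y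

/-- `M[a,b]`: the time edges of `M` with time label between `a` and `b`. -/
def restrict (M : Finset (Sym2 V × ℕ)) (a b : ℕ) : Finset (Sym2 V × ℕ) :=
  M.filter (fun et => a ≤ et.2 ∧ et.2 ≤ b)

/-- `G[a,b]`: the temporal graph on `V` whose time edges are exactly those
time edges of `G` with time label between `a` and `b`. -/
def tgSlice (G : TemporalGraph V) (a b : ℕ) : TemporalGraph V :=
  { tau := G.tau, E := fun t => if a ≤ t ∧ t ≤ b then G.E t else ∅ }

/-- `ν` suffices as a `Δ`-vertex cover bound for `G`: every `Δ` consecutive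
layers can be covered by at most `ν` vertices. -/
def IsDeltaVC (G : TemporalGraph V) (Δ ν : ℕ) : Prop :=
  ∀ i, 1 ≤ i → i ≤ G.tau - Δ + 1 →
    ∃ S : Finset V, S.card ≤ ν ∧
      ∀ t ∈ Finset.Icc i (i + Δ - 1), ∀ e ∈ G.E t, ∃ v ∈ S, v ∈ e

/-- `ν` is the `Δ`-vertex cover number of `G` (the minimum such bound). -/
def IsDeltaVCNum (G : TemporalGraph V) (Δ ν : ℕ) : Prop :=
  IsDeltaVC G Δ ν ∧ ∀ μ, IsDeltaVC G Δ μ → ν ≤ μ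

/-- The maximum size of a `Δ`-temporal matching of `G`. -/
noncomputable def maxMatchingSize (G : TemporalGraph V) (Δ : ℕ) : ℕ :=
  sSup { k | ∃ M : Finset (Sym2 V × ℕ), IsTemporalMatching G Δ M ∧ M.card = k }

/-- A family `ℳ` of sets of time edges is `d`-complete for `G` (w.r.t. `Δ`):
for every `Δ`-temporal matching `M` of `G` there is `M' ∈ ℳ` such that
`(M \ M[Δ(d-1)+1, Δd]) ∪ M'` is a `Δ`-temporal matching of `G` of size at
least `|M|`. -/
def DComplete {V : Type*} [DecidableEq V] (G : TemporalGraph V) (Δ d : ℕ)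
    (ℳ : Finset (Finset (Sym2 V × ℕ))) : Prop :=
  ∀ M : Finset (Sym2 V × ℕ), IsTemporalMatching G Δ M →
    ∃ M' ∈ ℳ,
      IsTemporalMatching G Δ ((M \ restrict M (Δ * (d - 1) + 1) (Δ * d)) ∪ M') ∧
      M.card ≤ ((M \ restrict M (Δ * (d - 1) + 1) (Δ * d)) ∪ M').card

open Classical in
/-- The dynamic-programming table: `Ttab G Δ ℳ 1 M = |M|`, and for `i > 1`,
`Ttab G Δ ℳ i M = max({|M| + Ttab G Δ ℳ (i-1) M' : M' ∈ ℳ (i-1), M ∪ M' is a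
Δ-temporal matching of G} ∪ {0})`. (The value at `i = 0` is irrelevant.) -/
noncomputable def Ttab {V : Type*} [DecidableEq V] (G : TemporalGraph V) (Δ : ℕ)
    (ℳ : ℕ → Finset (Finset (Sym2 V × ℕ))) :
    ℕ → Finset (Sym2 V × ℕ) → ℕ
  | 0, M => M.card
  | 1, M => M.card
  | (i + 2), M =>
      ((ℳ (i + 1)).filter (fun M' => IsTemporalMatching G Δ (M ∪ M'))).sup
        (fun M' => M.card + Ttab G Δ ℳ (i + 1) M')

/-! The inequality `≤` glues solutions: a nonzero entry `T_i[M]` is realised by a matching of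
`G[1, Δi]` whose last block lies in `M`, and a set `M'` of the next block only has to be compatible
with that last block, because all earlier time edges are at least `Δ` away from it.

For `≥`, start from any matching of `G[1, Δi]` and use completeness to exchange its blocks
`1, …, i` one after the other for members of `ℳ_1, …, ℳ_i`, never losing size. The blocks of
the resulting matching form a chain of pairwise compatible sets, which the recursion for `T`
takes into account. -/

section Restrict

variable {M N : Finset (Sym2 V × ℕ)} {a b c d : ℕ}

theorem mem_restrict {x : Sym2 V × ℕ} : x ∈ restrict M a b ↔ x ∈ M ∧ a ≤ x.2 ∧ x.2 ≤ b :=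
  Finset.mem_filter

theorem restrict_subset (M : Finset (Sym2 V × ℕ)) (a b : ℕ) : restrict M a b ⊆ M :=
  Finset.filter_subset _ _

theorem restrict_eq_self_iff : restrict M a b = M ↔ ∀ x ∈ M, a ≤ x.2 ∧ x.2 ≤ b :=
  Finset.filter_eq_self

theorem card_restrict_le_add (M : Finset (Sym2 V × ℕ)) (a b c : ℕ) :
    (restrict M a c).card ≤ (restrict M (b + 1) c).card + (restrict M a b).card := by
  classical
  refine (Finset.card_le_card fun x hx => ?_).trans (Finset.card_union_le _ _)
  simp only [Finset.mem_union, mem_restrict] at hx ⊢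
  grind

theorem disjoint_of_restrict_eq_self_of_lt (hM : restrict M a b = M) (hN : restrict N c d = N)
    (hda : d < a) : Disjoint M N := by
  rw [restrict_eq_self_iff] at hM hN
  rw [Finset.disjoint_left]
  grind

variable [DecidableEq V]

theorem restrict_sdiff_restrict_union_self (hN : restrict N a b = N) :
    restrict ((M \ restrict M a b) ∪ N) a b = N := by
  rw [restrict_eq_self_iff] at hN
  ext x
  simp only [mem_restrict, Finset.mem_union, Finset.mem_sdiff]
  grind

theorem restrict_sdiff_restrict_union_of_lt (hN : restrict N a b = N) (hda : d < a) :
    restrict ((M \ restrict M a b) ∪ N) c d = restrict M c d := by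
  rw [restrict_eq_self_iff] at hN
  ext x
  simp only [mem_restrict, Finset.mem_union, Finset.mem_sdiff]
  grind

theorem restrict_union_of_lt (hM : restrict M a b = M) (hN : restrict N c d = N) (hda : d < a) :
    restrict (M ∪ N) a b = M := by
  rw [restrict_eq_self_iff] at hM hN
  ext x
  simp only [mem_restrict, Finset.mem_union]
  grind

end Restrict

/-- The part of `M` in the `i`-th window `[Δ(i-1)+1, Δi]` of length `Δ`, for `i ≥ 1`. -/
def block (Δ : ℕ) (M : Finset (Sym2 V × ℕ)) (i : ℕ) : Finset (Sym2 V × ℕ) :=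
  restrict M (Δ * (i - 1) + 1) (Δ * i)

theorem DeltaIndep.symm {Δ : ℕ} {x y : Sym2 V × ℕ} (h : DeltaIndep Δ x y) :
    DeltaIndep Δ y x :=
  h.imp (fun hxy ⟨v, hy, hx⟩ => hxy ⟨v, hx, hy⟩) (fun hxy => abs_sub_comm (x.2 : ℤ) y.2 ▸ hxy)

theorem deltaIndep_of_add_le {Δ : ℕ} {x y : Sym2 V × ℕ} (h : y.2 + Δ ≤ x.2) :
    DeltaIndep Δ x y :=
  Or.inr ((by omega : (Δ : ℤ) ≤ x.2 - y.2).trans (le_abs_self _))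

section Matching

variable {G : TemporalGraph V} {Δ a b : ℕ} {M N : Finset (Sym2 V × ℕ)}

theorem isTimeEdge_tgSlice_iff {x : Sym2 V × ℕ} :
    IsTimeEdge (tgSlice G a b) x ↔ IsTimeEdge G x ∧ a ≤ x.2 ∧ x.2 ≤ b := by
  by_cases h : a ≤ x.2 ∧ x.2 ≤ b <;> simp [IsTimeEdge, tgSlice, h]

theorem isTemporalMatching_tgSlice_iff :
    IsTemporalMatching (tgSlice G a b) Δ M ↔ IsTemporalMatching G Δ M ∧ restrict M a b = M := by
  simp only [IsTemporalMatching, isTimeEdge_tgSlice_iff, restrict_eq_self_iff, forall₂_and]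
  tauto

theorem isTemporalMatching_empty (G : TemporalGraph V) (Δ : ℕ) : IsTemporalMatching G Δ ∅ := by
  simp [IsTemporalMatching]

theorem IsTemporalMatching.mono (hN : IsTemporalMatching G Δ N) (h : M ⊆ N) :
    IsTemporalMatching G Δ M :=
  ⟨fun x hx => hN.1 x (h hx), fun x hx y hy => hN.2 x (h hx) y (h hy)⟩

theorem IsTemporalMatching.union [DecidableEq V] (hM : IsTemporalMatching G Δ M)
    (hN : IsTemporalMatching G Δ N) (hMN : ∀ x ∈ M, ∀ y ∈ N, x ≠ y → DeltaIndep Δ x y) :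
    IsTemporalMatching G Δ (M ∪ N) := by
  refine ⟨fun x hx => (Finset.mem_union.1 hx).elim (hM.1 x) (hN.1 x), fun x hx y hy hxy => ?_⟩
  rcases Finset.mem_union.1 hx with hx | hx <;> rcases Finset.mem_union.1 hy with hy | hy
  · exact hM.2 x hx y hy hxy
  · exact hMN x hx y hy hxy
  · exact (hMN y hy x hx hxy.symm).symm
  · exact hN.2 x hx y hy hxy

theorem IsTemporalMatching.union_of_union_restrict [DecidableEq V]
    (hN : IsTemporalMatching G Δ N) (h : IsTemporalMatching G Δ (M ∪ restrict N a b))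
    (hM_late : ∀ x ∈ M, b < x.2) (hN_early : ∀ y ∈ N, y.2 ≤ b) (hab : a + Δ ≤ b + 1) :
    IsTemporalMatching G Δ (M ∪ N) := by
  refine (h.mono Finset.subset_union_left).union hN fun x hx y hy hxy => ?_
  by_cases hay : a ≤ y.2
  · have hy' : y ∈ restrict N a b := mem_restrict.2 ⟨hy, hay, hN_early y hy⟩
    exact h.2 x (Finset.mem_union_left _ hx) y (Finset.mem_union_right _ hy') hxy
  · have := hM_late x hx
    exact deltaIndep_of_add_le (by omega)

theorem IsTemporalMatching.union_of_union_block [DecidableEq V] {i : ℕ} (hi : 1 ≤ i)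
    (hN : IsTemporalMatching (tgSlice G 1 (Δ * i)) Δ N) (hM : block Δ M (i + 1) = M)
    (h : IsTemporalMatching G Δ (M ∪ block Δ N i)) :
    IsTemporalMatching (tgSlice G 1 (Δ * (i + 1))) Δ (M ∪ N) := by
  obtain ⟨hNG, hN_time⟩ := isTemporalMatching_tgSlice_iff.1 hN
  rw [restrict_eq_self_iff] at hN_time
  rw [block, restrict_eq_self_iff, Nat.add_sub_cancel] at hM
  have hwindow : Δ * i = Δ * (i - 1) + Δ := by rw [← Nat.mul_add_one, Nat.sub_add_cancel hi]
  have hmono : Δ * i ≤ Δ * (i + 1) := Nat.mul_le_mul_left Δ i.le_succ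
  refine isTemporalMatching_tgSlice_iff.2 ⟨?_, restrict_eq_self_iff.2 fun x hx => ?_⟩
  · exact hNG.union_of_union_restrict h (fun x hx => (hM x hx).1)
      (fun y hy => (hN_time y hy).2) (by omega)
  · rcases Finset.mem_union.1 hx with hxM | hxN
    · exact ⟨(Nat.le_add_left 1 _).trans (hM x hxM).1, (hM x hxM).2⟩
    · exact ⟨(hN_time x hxN).1, (hN_time x hxN).2.trans hmono⟩

theorem bddAbove_card_isTemporalMatching (G : TemporalGraph V) (Δ : ℕ) :
    BddAbove {k | ∃ M : Finset (Sym2 V × ℕ), IsTemporalMatching G Δ M ∧ M.card = k} := by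
  classical
  refine ⟨((Finset.Icc 1 G.tau).biUnion G.E ×ˢ Finset.Icc 1 G.tau).card, ?_⟩
  rintro _ ⟨M, hM, rfl⟩
  refine Finset.card_le_card fun x hx => ?_
  obtain ⟨hE, htime⟩ := hM.1 x hx
  have hx₂ : x.2 ∈ Finset.Icc 1 G.tau := Finset.mem_Icc.2 htime
  exact Finset.mem_product.2 ⟨Finset.mem_biUnion.2 ⟨x.2, hx₂, hE⟩, hx₂⟩

theorem IsTemporalMatching.card_le_maxMatchingSize (hM : IsTemporalMatching G Δ M) :
    M.card ≤ maxMatchingSize G Δ :=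
  le_csSup (bddAbove_card_isTemporalMatching G Δ) ⟨M, hM, rfl⟩

theorem maxMatchingSize_le {k : ℕ}
    (h : ∀ M : Finset (Sym2 V × ℕ), IsTemporalMatching G Δ M → M.card ≤ k) :
    maxMatchingSize G Δ ≤ k := by
  refine csSup_le ⟨0, ∅, isTemporalMatching_empty G Δ, rfl⟩ ?_
  rintro _ ⟨M, hM, rfl⟩
  exact h M hM

end Matching

section DynamicProgram

variable [DecidableEq V] {G : TemporalGraph V} {Δ i : ℕ}
  {ℳ : ℕ → Finset (Finset (Sym2 V × ℕ))}

theorem add_ttab_le_ttab_succ {M M' : Finset (Sym2 V × ℕ)} (hi : 1 ≤ i) (hM' : M' ∈ ℳ i)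
    (h : IsTemporalMatching G Δ (M ∪ M')) :
    M.card + Ttab G Δ ℳ i M' ≤ Ttab G Δ ℳ (i + 1) M := by
  classical
  obtain ⟨k, rfl⟩ := Nat.exists_eq_add_of_le' hi
  rw [Ttab]
  exact Finset.le_sup (f := fun M' => M.card + Ttab G Δ ℳ (k + 1) M')
    (Finset.mem_filter.2 ⟨hM', h⟩)

theorem ttab_succ_eq_zero_or_exists (hi : 1 ≤ i) (M : Finset (Sym2 V × ℕ)) :
    Ttab G Δ ℳ (i + 1) M = 0 ∨ ∃ M' ∈ ℳ i, IsTemporalMatching G Δ (M ∪ M') ∧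
      Ttab G Δ ℳ (i + 1) M = M.card + Ttab G Δ ℳ i M' := by
  classical
  obtain ⟨k, rfl⟩ := Nat.exists_eq_add_of_le' hi
  rw [Ttab]
  rcases Finset.eq_empty_or_nonempty
    ((ℳ (k + 1)).filter fun M' => IsTemporalMatching G Δ (M ∪ M')) with hempty | hne
  · left
    rw [hempty, Finset.sup_empty, Nat.bot_eq_zero]
  · right
    obtain ⟨M', hM', hsup⟩ := Finset.exists_mem_eq_sup _ hne
      fun M' => M.card + Ttab G Δ ℳ (k + 1) M'
    obtain ⟨hmem, hcompat⟩ := Finset.mem_filter.1 hM'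
    exact ⟨M', hmem, hcompat, hsup⟩

theorem exists_isTemporalMatching_ttab_le_card (hi : 1 ≤ i)
    (hmatch : ∀ j ∈ Finset.Icc 1 i, ∀ M ∈ ℳ j,
      IsTemporalMatching (tgSlice G (Δ * (j - 1) + 1) (Δ * j)) Δ M) :
    ∀ M ∈ ℳ i, ∃ N, IsTemporalMatching (tgSlice G 1 (Δ * i)) Δ N ∧
      block Δ N i ⊆ M ∧ Ttab G Δ ℳ i M ≤ N.card := by
  induction i, hi using Nat.le_induction with
  | base =>
    intro M hM
    exact ⟨M, by simpa using hmatch 1 (by simp) M hM, restrict_subset _ _ _, le_rfl⟩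
  | succ i hi ih =>
    intro M hM
    rcases ttab_succ_eq_zero_or_exists (G := G) (Δ := Δ) (ℳ := ℳ) hi M with
      hzero | ⟨M', hM', hcompat, hT⟩
    · exact ⟨∅, isTemporalMatching_empty _ _, by simp [block, restrict], by simp [hzero]⟩
    obtain ⟨N, hN, hNM', hTN⟩ :=
      ih (fun j hj => hmatch j (Finset.Icc_subset_Icc_right i.le_succ hj)) M' hM'
    have hM_block : block Δ M (i + 1) = M :=
      (isTemporalMatching_tgSlice_iff.1 (hmatch (i + 1) (by simp) M hM)).2
    have hN_time := (isTemporalMatching_tgSlice_iff.1 hN).2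
    have hwindow : Δ * i < Δ * (i + 1 - 1) + 1 := Nat.lt_succ_self _
    refine ⟨M ∪ N, hN.union_of_union_block hi hM_block
      (hcompat.mono (Finset.union_subset_union_right hNM')), ?_, ?_⟩
    · exact (restrict_union_of_lt hM_block hN_time hwindow).subset
    · rw [hT, Finset.card_union_of_disjoint
        (disjoint_of_restrict_eq_self_of_lt hM_block hN_time hwindow)]
      exact Nat.add_le_add_left hTN _

theorem DComplete.tgSlice {a b d : ℕ} {𝒩 : Finset (Finset (Sym2 V × ℕ))}
    (h : DComplete G Δ d 𝒩) (hblock : ∀ M ∈ 𝒩, block Δ M d = M)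
    (ha : a ≤ Δ * (d - 1) + 1) (hb : Δ * d ≤ b) : DComplete (tgSlice G a b) Δ d 𝒩 := by
  intro M hM
  obtain ⟨hMG, hM_time⟩ := isTemporalMatching_tgSlice_iff.1 hM
  obtain ⟨M', hM', hmatching, hcard⟩ := h M hMG
  refine ⟨M', hM', isTemporalMatching_tgSlice_iff.2 ⟨hmatching, ?_⟩, hcard⟩
  have hM'_time := restrict_eq_self_iff.1 (hblock M' hM')
  rw [restrict_eq_self_iff] at hM_time ⊢
  grind

theorem exists_isTemporalMatching_block_mem (n : ℕ)
    (hblock : ∀ j ∈ Finset.Icc 1 n, ∀ M ∈ ℳ j, block Δ M j = M)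
    (hcomp : ∀ j ∈ Finset.Icc 1 n, DComplete G Δ j (ℳ j))
    {N : Finset (Sym2 V × ℕ)} (hN : IsTemporalMatching G Δ N) :
    ∃ N', IsTemporalMatching G Δ N' ∧ N.card ≤ N'.card ∧
      ∀ j ∈ Finset.Icc 1 n, block Δ N' j ∈ ℳ j := by
  induction n with
  | zero => exact ⟨N, hN, le_rfl, by simp⟩
  | succ n ih =>
    have hIcc : Finset.Icc 1 n ⊆ Finset.Icc 1 (n + 1) := Finset.Icc_subset_Icc_right n.le_succ
    have hlast : n + 1 ∈ Finset.Icc 1 (n + 1) := by simp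
    obtain ⟨N₁, hN₁, hcard₁, hmem₁⟩ :=
      ih (fun j hj => hblock j (hIcc hj)) (fun j hj => hcomp j (hIcc hj))
    obtain ⟨M, hM, hmatching, hcard⟩ := hcomp (n + 1) hlast N₁ hN₁
    have hM_block := hblock (n + 1) hlast M hM
    refine ⟨_, hmatching, hcard₁.trans hcard, fun j hj => ?_⟩
    rcases (Finset.mem_Icc.1 hj).2.eq_or_lt with rfl | hjn
    · rwa [block, restrict_sdiff_restrict_union_self hM_block]
    · rw [block, restrict_sdiff_restrict_union_of_lt hM_block]
      · exact hmem₁ j (Finset.mem_Icc.2 ⟨(Finset.mem_Icc.1 hj).1, Nat.le_of_lt_succ hjn⟩)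
      · exact Nat.lt_succ_of_le (Nat.mul_le_mul_left Δ (Nat.le_of_lt_succ hjn))

theorem IsTemporalMatching.card_restrict_le_ttab {N : Finset (Sym2 V × ℕ)}
    (hN : IsTemporalMatching G Δ N) (hi : 1 ≤ i)
    (hmem : ∀ j ∈ Finset.Ico 1 i, block Δ N j ∈ ℳ j) :
    (restrict N 1 (Δ * i)).card ≤ Ttab G Δ ℳ i (block Δ N i) := by
  induction i, hi using Nat.le_induction with
  | base => simp [Ttab, block]
  | succ i hi ih =>
    have hcompat : IsTemporalMatching G Δ (block Δ N (i + 1) ∪ block Δ N i) :=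
      hN.mono (Finset.union_subset (restrict_subset _ _ _) (restrict_subset _ _ _))
    calc (restrict N 1 (Δ * (i + 1))).card
        ≤ (block Δ N (i + 1)).card + (restrict N 1 (Δ * i)).card :=
          card_restrict_le_add N 1 (Δ * i) (Δ * (i + 1))
      _ ≤ (block Δ N (i + 1)).card + Ttab G Δ ℳ i (block Δ N i) :=
          Nat.add_le_add_left
            (ih fun j hj => hmem j (Finset.Ico_subset_Ico_right i.le_succ hj)) _
      _ ≤ Ttab G Δ ℳ (i + 1) (block Δ N (i + 1)) :=
          add_ttab_le_ttab_succ hi (hmem i (Finset.mem_Ico.2 ⟨hi, i.lt_succ_self⟩)) hcompat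

end DynamicProgram

theorem statement12_general {V : Type*} [DecidableEq V] (Δ i : ℕ) (hi : 1 ≤ i)
    (G : TemporalGraph V) (ℳ : ℕ → Finset (Finset (Sym2 V × ℕ)))
    (hmatch : ∀ j ∈ Finset.Icc 1 i, ∀ M ∈ ℳ j,
      IsTemporalMatching (tgSlice G (Δ * (j - 1) + 1) (Δ * j)) Δ M)
    (hcomp : ∀ j ∈ Finset.Icc 1 i, DComplete G Δ j (ℳ j)) :
    (ℳ i).sup (fun M => Ttab G Δ ℳ i M) = maxMatchingSize (tgSlice G 1 (Δ * i)) Δ := by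
  have hblock : ∀ j ∈ Finset.Icc 1 i, ∀ M ∈ ℳ j, block Δ M j = M :=
    fun j hj M hM => (isTemporalMatching_tgSlice_iff.1 (hmatch j hj M hM)).2
  have hcomp_slice : ∀ j ∈ Finset.Icc 1 i, DComplete (tgSlice G 1 (Δ * i)) Δ j (ℳ j) :=
    fun j hj => (hcomp j hj).tgSlice (hblock j hj) (Nat.le_add_left _ _)
      (Nat.mul_le_mul_left Δ (Finset.mem_Icc.1 hj).2)
  apply le_antisymm
  · refine Finset.sup_le fun M hM => ?_
    obtain ⟨N, hN, -, hT⟩ := exists_isTemporalMatching_ttab_le_card hi hmatch M hM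
    exact hT.trans hN.card_le_maxMatchingSize
  · refine maxMatchingSize_le fun N hN => ?_
    obtain ⟨N', hN', hcard, hmem⟩ := exists_isTemporalMatching_block_mem i hblock hcomp_slice hN
    obtain ⟨hN'G, hN'_time⟩ := isTemporalMatching_tgSlice_iff.1 hN'
    calc N.card ≤ N'.card := hcard
      _ = (restrict N' 1 (Δ * i)).card := by rw [hN'_time]
      _ ≤ Ttab G Δ ℳ i (block Δ N' i) :=
        hN'G.card_restrict_le_ttab hi fun j hj => hmem j (Finset.Ico_subset_Icc_self hj)
      _ ≤ (ℳ i).sup (fun M => Ttab G Δ ℳ i M) :=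
        Finset.le_sup (f := fun M => Ttab G Δ ℳ i M) (hmem i (Finset.right_mem_Icc.2 hi))

/-- Let `tau = L·Δ` and for each `i ∈ [L]` let `ℳ i` be a
family of `Δ`-temporal matchings of `G[Δ(i-1)+1, Δi]` which is `i`-complete for
`G`. Then for every `i ∈ [L]`, `max_{M ∈ ℳ i} T_i[M]` equals the maximum size
of a `Δ`-temporal matching of `G[1, Δi]`. -/
theorem statement12 {V : Type*} [DecidableEq V] (Δ L : ℕ) (hΔ : 1 ≤ Δ) (hL : 1 ≤ L)
    (G : TemporalGraph V) (htau : G.tau = L * Δ)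
    (ℳ : ℕ → Finset (Finset (Sym2 V × ℕ)))
    (hmatch : ∀ i ∈ Finset.Icc 1 L, ∀ M ∈ ℳ i,
      IsTemporalMatching (tgSlice G (Δ * (i - 1) + 1) (Δ * i)) Δ M)
    (hcomp : ∀ i ∈ Finset.Icc 1 L, DComplete G Δ i (ℳ i)) :
    ∀ i ∈ Finset.Icc 1 L,
      (ℳ i).sup (fun M => Ttab G Δ ℳ i M) =
        maxMatchingSize (tgSlice G 1 (Δ * i)) Δ := by
  intro i hi
  have hsub : Finset.Icc 1 i ⊆ Finset.Icc 1 L :=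
    Finset.Icc_subset_Icc_right (Finset.mem_Icc.1 hi).2
  exact statement12_general Δ i (Finset.mem_Icc.1 hi).1 G ℳ
    (fun j hj => hmatch j (hsub hj)) (fun j hj => hcomp j (hsub hj))
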